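/- For a gl(m|n)-weight λ, the U(gl(m+1|n))-module F_a ⊗ L(λ) is isomorphic to the simple highest weight gl(m+1|n)-module L(λ̃) if and only if F_a ⊗ L(λ) is generated by the highest weight vector t_0^a ⊗ v_λ. -/

import Mathlib

set_option maxHeartbeats 1000000
set_option synthInstance.maxHeartbeats 400000

noncomputable section
open scoped TensorProduct

/-- The index set `I = {1,…,m,1̄,…,n̄}` of `gl(m|n)`; `Sum.inl` are the even
(unbarred) indices, `Sum.inr` the odd (barred) ones.  The index set
`Î = {0} ∪ I` of `gl(m+1|n)` is realized as `Ind (m+1) n`, with `0 = Sum.inl 0`. -/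
abbrev Ind (m n : ℕ) := Fin m ⊕ Fin n

/-- Parity of an index, as `0` or `1`. -/
def pI {m n : ℕ} : Ind m n → ℕ := Sum.elim (fun _ => 0) (fun _ => 1)

/-- The total order `1 < ⋯ < m < 1̄ < ⋯ < n̄` on `I` (and, with `m+1` in place of `m`,
the order `0 < 1 < ⋯ < m < 1̄ < ⋯ < n̄` on `Î`). -/
def iltI {m n : ℕ} : Ind m n → Ind m n → Prop
  | Sum.inl a, Sum.inl b => a < b
  | Sum.inl _, Sum.inr _ => True
  | Sum.inr _, Sum.inl _ => False
  | Sum.inr a, Sum.inr b => a < b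

/-- The distinguished index `0` of `Î`. -/
def z0 {m n : ℕ} : Ind (m+1) n := Sum.inl 0

/-- The inclusion `I ↪ Î`. -/
def emb {m n : ℕ} : Ind m n → Ind (m+1) n := Sum.map Fin.succ id

lemma emb_injective {m n : ℕ} : Function.Injective (emb (m := m) (n := n)) := by
  intro a b h
  cases a <;> cases b <;> simp [emb, Fin.succ_inj] at h <;> simp [h]

lemma emb_ne_z0 {m n : ℕ} (a : Ind m n) : emb a ≠ z0 := by
  cases a <;> simp [emb, z0, Fin.succ_ne_zero]

/-- Builds a linear map out of a space with basis `α` from a function on basis vectors. -/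
def mkOp {α M : Type} [AddCommGroup M] [Module ℂ M] (g : α → M) : (α →₀ ℂ) →ₗ[ℂ] M :=
  Finsupp.lsum ℂ fun x => LinearMap.toSpanSingleton ℂ M (g x)

/-- Number of odd variables occurring before position `i`. -/
def cntB {n : ℕ} (b : Fin n → Bool) (i : Fin n) : ℕ :=
  (Finset.univ.filter fun j => j < i ∧ b j = true).card

/-- Number of odd variables occurring. -/
def cntA {n : ℕ} (b : Fin n → Bool) : ℕ := (Finset.univ.filter fun j => b j = true).card


/-- The defining (super-)commutation relations of `gl`:
`e_ij e_kl − (−1)^{(|i|+|j|)(|k|+|l|)} e_kl e_ij = δ_jk e_il − (−1)^{(|i|+|j|)(|k|+|l|)} δ_li e_kj`. -/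
inductive glRel (ι : Type) (p : ι → ℕ) [DecidableEq ι] :
    FreeAlgebra ℂ (ι × ι) → FreeAlgebra ℂ (ι × ι) → Prop
  | basic (i j k l : ι) : glRel ι p
      (FreeAlgebra.ι ℂ (i, j) * FreeAlgebra.ι ℂ (k, l)
        - ((-1 : ℂ) ^ ((p i + p j) * (p k + p l))) •
            (FreeAlgebra.ι ℂ (k, l) * FreeAlgebra.ι ℂ (i, j)))
      ((if j = k then FreeAlgebra.ι ℂ (i, l) else 0)
        - ((-1 : ℂ) ^ ((p i + p j) * (p k + p l))) •
            (if l = i then FreeAlgebra.ι ℂ (k, j) else 0))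

/-- The universal enveloping superalgebra of the general linear Lie superalgebra with
index set `ι` and parity `p`, presented by generators `e_ij` and the super-commutator
relations. -/
abbrev UEA (ι : Type) (p : ι → ℕ) [DecidableEq ι] : Type := RingQuot (glRel ι p)

/-- The generator `e_ij` of `UEA ι p`. -/
def gen {ι : Type} (p : ι → ℕ) [DecidableEq ι] (i j : ι) : UEA ι p :=
  RingQuot.mkAlgHom ℂ (glRel ι p) (FreeAlgebra.ι ℂ (i, j))

/-- Monomials of the `D'(m|n)`-module `F_a`: such a monomial
`t_0^{a−k_1−⋯−k_{n̄}} t_1^{k_1}⋯t_m^{k_m} t_{1̄}^{k_{1̄}}⋯t_{n̄}^{k_{n̄}}` is determined by the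
exponents `(k_1,…,k_m,k_{1̄},…,k_{n̄})`. -/
abbrev FaMon (m n : ℕ) := (Fin m → ℕ) × (Fin n → Bool)

/-- The module `F_a`, as the vector space with basis its monomials. -/
abbrev FaSp (m n : ℕ) : Type := FaMon m n →₀ ℂ

/-- A basis monomial of `F_a`. -/
def amono {m n : ℕ} (x : FaMon m n) : FaSp m n := Finsupp.single x 1

/-- The parity of a monomial of `F_a`. -/
def parM {m n : ℕ} (x : FaMon m n) : ℕ := cntA x.2

/-- The monomial `t_0^a` of `F_a`. -/
def hwMon (m n : ℕ) : FaMon m n := (fun _ => 0, fun _ => false)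

/-- Multiplication by `t_i/t_0` on `F_a`, even `i`. -/
def aDivE {m n : ℕ} (i : Fin m) : Module.End ℂ (FaSp m n) :=
  mkOp fun x => amono (Function.update x.1 i (x.1 i + 1), x.2)

/-- Multiplication by `t_ī/t_0` on `F_a`, odd `ī`. -/
def aDivO {m n : ℕ} (i : Fin n) : Module.End ℂ (FaSp m n) :=
  mkOp fun x => if x.2 i then 0 else
    ((-1 : ℂ) ^ (cntB x.2 i)) • amono (x.1, Function.update x.2 i true)

/-- The operator `t_0∂_0` on `F_a` (the exponent of `t_0` is `a` minus the total degree of the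
other variables). -/
def aPar0 {m n : ℕ} (a : ℂ) : Module.End ℂ (FaSp m n) :=
  mkOp fun x => (a - (∑ i, (x.1 i : ℂ)) - (cntA x.2 : ℂ)) • amono x

/-- The operator `t_0∂_i` on `F_a`, even `i`. -/
def aParE {m n : ℕ} (i : Fin m) : Module.End ℂ (FaSp m n) :=
  mkOp fun x => (x.1 i : ℂ) • amono (Function.update x.1 i (x.1 i - 1), x.2)

/-- The operator `t_0∂_ī` on `F_a`, odd `ī`. -/
def aParO {m n : ℕ} (i : Fin n) : Module.End ℂ (FaSp m n) :=
  mkOp fun x => if x.2 i then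
    ((-1 : ℂ) ^ (cntB x.2 i)) • amono (x.1, Function.update x.2 i false) else 0

/-- `t_i/t_0` on `F_a` for `i ∈ I`. -/
def aDiv {m n : ℕ} : Ind m n → Module.End ℂ (FaSp m n) := Sum.elim aDivE aDivO

/-- `t_0∂_i` on `F_a` for `i ∈ Î`. -/
def aParB {m n : ℕ} (a : ℂ) : Ind (m+1) n → Module.End ℂ (FaSp m n) :=
  Sum.elim (Fin.cases (aPar0 a) aParE) aParO

/-- `t_i/t_0` on `F_a` for `i ∈ Î`. -/
def aDivB {m n : ℕ} : Ind (m+1) n → Module.End ℂ (FaSp m n) :=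
  Sum.elim (Fin.cases 1 aDivE) aDivO

/-- The operator `t_i∂_j` on `F_a`, `i, j ∈ Î`. -/
def aTD {m n : ℕ} (a : ℂ) (i j : Ind (m+1) n) : Module.End ℂ (FaSp m n) :=
  aDivB i * aParB a j

/-- The simple highest weight module `L(λ)` over `U(gl(m|n))`: a simple module with a
(nonzero) highest weight vector of weight `λ`. -/
structure SimpleHW (m n : ℕ) (lam : Ind m n → ℂ) where
  L : Type
  [acg : AddCommGroup L]
  [mod : Module ℂ L]
  ρ : UEA (Ind m n) pI →ₐ[ℂ] Module.End ℂ L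
  v : L
  v_ne : v ≠ 0
  hw : ∀ i j : Ind m n, iltI i j → ρ (gen pI i j) v = 0
  hwt : ∀ i : Ind m n, ρ (gen pI i i) v = lam i • v
  simple : ∀ N : Submodule ℂ L, (∀ u x, x ∈ N → ρ u x ∈ N) → N = ⊥ ∨ N = ⊤

attribute [instance] SimpleHW.acg SimpleHW.mod

/-- The Verma module `M(λ)` over `U(gl(m|n))`: a module generated by a highest weight vector
of weight `λ` which is universal among such. -/
structure VermaM (m n : ℕ) (lam : Ind m n → ℂ) where
  L : Type
  [acg : AddCommGroup L]
  [mod : Module ℂ L]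
  ρ : UEA (Ind m n) pI →ₐ[ℂ] Module.End ℂ L
  v : L
  v_ne : v ≠ 0
  hw : ∀ i j : Ind m n, iltI i j → ρ (gen pI i j) v = 0
  hwt : ∀ i : Ind m n, ρ (gen pI i i) v = lam i • v
  gens : ∀ N : Submodule ℂ L, (∀ u x, x ∈ N → ρ u x ∈ N) → v ∈ N → N = ⊤
  univ : ∀ (W : Type) [AddCommGroup W] [Module ℂ W]
      (ρW : UEA (Ind m n) pI →ₐ[ℂ] Module.End ℂ W) (w : W),
      (∀ i j : Ind m n, iltI i j → ρW (gen pI i j) w = 0) →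
      (∀ i : Ind m n, ρW (gen pI i i) w = lam i • w) →
      ∃ g : L →ₗ[ℂ] W, g v = w ∧ ∀ u x, g (ρ u x) = ρW u (g x)

attribute [instance] VermaM.acg VermaM.mod

/-- The predicate expressing that `Θ` is the representation of `U(gl(m+1|n))` on
`F_a ⊗ L` obtained via `φ_R` from a representation `ρ` of `U(gl(m|n))` on `L`, where the
central element `R` acts by the scalar `r`; the formulas for the action of the generators on
pure tensors (with the appropriate Koszul signs) are written out explicitly. -/
def IsTensorRep {m n : ℕ} (a r : ℂ) {L : Type} [AddCommGroup L] [Module ℂ L]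
    (ρ : UEA (Ind m n) pI →ₐ[ℂ] Module.End ℂ L)
    (Θ : UEA (Ind (m+1) n) pI →ₐ[ℂ] Module.End ℂ (FaSp m n ⊗[ℂ] L)) : Prop :=
  (∀ (c d : Ind m n) (x : FaMon m n) (v : L),
    Θ (gen pI (emb c) (emb d)) (amono x ⊗ₜ[ℂ] v) =
      (aTD a (emb c) (emb d)) (amono x) ⊗ₜ[ℂ] v
      + ((-1 : ℂ) ^ ((pI c + pI d) * parM x)) • (amono x ⊗ₜ[ℂ] (ρ (gen pI c d) v))
      + (if c = d then (((-1 : ℂ) ^ (pI c * pI d)) * r) • (amono x ⊗ₜ[ℂ] v) else 0)) ∧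
  (∀ (c : Ind m n) (x : FaMon m n) (v : L),
    Θ (gen pI (emb c) z0) (amono x ⊗ₜ[ℂ] v) =
      (aTD a (emb c) z0) (amono x) ⊗ₜ[ℂ] v
      - ∑ j : Ind m n, (((-1 : ℂ) ^ (pI c * pI j)) * ((-1 : ℂ) ^ ((pI c + pI j) * parM x))) •
          ((aDiv j (amono x)) ⊗ₜ[ℂ] (ρ (gen pI c j) v))) ∧
  (∀ (d : Ind m n) (x : FaMon m n) (v : L),
    Θ (gen pI z0 (emb d)) (amono x ⊗ₜ[ℂ] v) = (aTD a z0 (emb d)) (amono x) ⊗ₜ[ℂ] v) ∧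
  (∀ (x : FaMon m n) (v : L),
    Θ (gen pI z0 z0) (amono x ⊗ₜ[ℂ] v) =
      (aTD a z0 z0) (amono x) ⊗ₜ[ℂ] v + r • (amono x ⊗ₜ[ℂ] v))

/-- The shifted weight `λ̃ = (a+r, λ_1+r, …, λ_m+r, λ_{1̄}−r, …, λ_{n̄}−r)`. -/
def lamTilde {m n : ℕ} (a r : ℂ) (lam : Ind m n → ℂ) : Ind (m+1) n → ℂ :=
  Sum.elim (Fin.cases (a + r) fun k => lam (Sum.inl k) + r) fun k => lam (Sum.inr k) - r

/-- The Weyl vector `ρ_{m|n} = (m, m−1, …, 1, −1, −2, …, −n)`. -/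
def rhoS {m n : ℕ} : Ind m n → ℂ := Sum.elim (fun k => (m : ℂ) - k) fun k => -(k : ℂ) - 1

/-- Antidominance of a weight of `gl(m|n)`:
`⟨λ+ρ, α^∨⟩ ∉ ℤ_{>0}` for all positive even roots `α`. -/
def Antidom {m n : ℕ} (lam : Ind m n → ℂ) : Prop :=
  (∀ i j : Fin m, i < j → ¬∃ N : ℕ,
    (lam (Sum.inl i) + rhoS (m:=m) (n:=n) (Sum.inl i)) - (lam (Sum.inl j) + rhoS (m:=m) (n:=n) (Sum.inl j)) = (N : ℂ) + 1) ∧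
  (∀ i j : Fin n, i < j → ¬∃ N : ℕ,
    (lam (Sum.inr i) + rhoS (m:=m) (n:=n) (Sum.inr i)) - (lam (Sum.inr j) + rhoS (m:=m) (n:=n) (Sum.inr j)) = (N : ℂ) + 1)

/-- Typicality of a weight of `gl(m|n)`:
`(λ+ρ, α) ≠ 0` for all positive odd isotropic roots `α = δ_i − ε_j`. -/
def Typical {m n : ℕ} (lam : Ind m n → ℂ) : Prop :=
  ∀ (i : Fin m) (j : Fin n),
    (lam (Sum.inl i) + rhoS (m:=m) (n:=n) (Sum.inl i)) + (lam (Sum.inr j) + rhoS (m:=m) (n:=n) (Sum.inr j)) ≠ 0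

/- On `F_a ⊗ L(λ)` the elements `e_0i`, `i ∈ I`, act by `t_0∂_i`, which lower the degree in the
variables `t_i`. A vector killed by all of them is killed by the Euler operator `∑ t_i∂_i`, hence
lies in `t_0^a ⊗ L(λ)`; so every nonzero submodule `N` meets `t_0^a ⊗ L(λ)`. There `gl(m|n)` acts
as on `L(λ)` up to adding scalars to the diagonal generators, so `{v | t_0^a ⊗ v ∈ N}` is a nonzero
submodule of `L(λ)`, that is, all of it. Hence `F_a ⊗ L(λ)` is simple if and only if it is generated
by `t_0^a ⊗ v_λ`.

This vector is a highest weight vector of weight `λ̃`, and two simple modules `V`, `W` with highest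
weight vectors `v`, `w` of the same weight are isomorphic: as lowering operators strictly decrease
the height, the submodule of `V ⊕ W` generated by `(v, w)` contains neither `(v, 0)` nor `(0, w)`,
so it is the graph of an isomorphism. -/

section Representations

variable {R A V W : Type*} [CommSemiring R] [Semiring A] [Algebra R A]
  [AddCommMonoid V] [Module R V] [AddCommMonoid W] [Module R W]
  {ρ : A →ₐ[R] Module.End R V} {σ : A →ₐ[R] Module.End R W}

/-- Subrepresentations: the submodules of `V` stable under the action `ρ` of the algebra `A`. -/
def IsSubrep (ρ : A →ₐ[R] Module.End R V) (N : Submodule R V) : Prop :=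
  ∀ u, ∀ x ∈ N, ρ u x ∈ N

/-- Irreducibility of a representation, in the form used by `SimpleHW`: the zero representation is
not excluded. -/
def IsIrreducibleRep (ρ : A →ₐ[R] Module.End R V) : Prop :=
  ∀ N : Submodule R V, IsSubrep ρ N → N = ⊥ ∨ N = ⊤

/-- Cyclic vectors: `w` generates the representation `ρ`. -/
def IsCyclicVector (ρ : A →ₐ[R] Module.End R V) (w : V) : Prop :=
  ∀ N : Submodule R V, IsSubrep ρ N → w ∈ N → N = ⊤

lemma IsSubrep.map {N : Submodule R V} (hN : IsSubrep ρ N) (f : V →ₗ[R] W)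
    (hf : ∀ u x, f (ρ u x) = σ u (f x)) : IsSubrep σ (N.map f) := by
  rintro u _ ⟨x, hx, rfl⟩
  exact ⟨ρ u x, hN u x hx, hf u x⟩

lemma IsSubrep.comap {N : Submodule R W} (hN : IsSubrep σ N) (f : V →ₗ[R] W)
    (hf : ∀ u x, f (ρ u x) = σ u (f x)) : IsSubrep ρ (N.comap f) := by
  intro u x hx
  rw [Submodule.mem_comap, hf]
  exact hN u _ hx

lemma IsIrreducibleRep.isCyclicVector (hρ : IsIrreducibleRep ρ) {w : V} (hw : w ≠ 0) :
    IsCyclicVector ρ w :=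
  fun N hN hwN => (hρ N hN).resolve_left fun h => hw <| by rwa [h, Submodule.mem_bot] at hwN

lemma IsIrreducibleRep.of_equiv (hσ : IsIrreducibleRep σ) (e : V ≃ₗ[R] W)
    (he : ∀ u x, e (ρ u x) = σ u (e x)) : IsIrreducibleRep ρ := by
  intro N hN
  refine (hσ (N.map e.toLinearMap) (hN.map _ he)).imp (fun h => ?_) (fun h => ?_)
  · exact Submodule.map_eq_bot_iff.1 h
  · exact Submodule.map_eq_top_iff.1 h

/-- The direct sum `V ⊕ W` of two representations. -/
def prodRep (ρ : A →ₐ[R] Module.End R V) (σ : A →ₐ[R] Module.End R W) :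
    A →ₐ[R] Module.End R (V × W) :=
  (LinearMap.prodMapAlgHom R V W).comp (ρ.prod σ)

lemma prodRep_apply (u : A) (x : V × W) : prodRep ρ σ u x = (ρ u x.1, σ u x.2) := rfl

end Representations

section Goursat

variable {R A V W : Type*} [CommRing R] [Semiring A] [Algebra R A]
  [AddCommGroup V] [Module R V] [AddCommGroup W] [Module R W]
  {ρ : A →ₐ[R] Module.End R V} {σ : A →ₐ[R] Module.End R W}

lemma IsIrreducibleRep.exists_equiv_of_isSubrep_prodRep (hρ : IsIrreducibleRep ρ)
    (hσ : IsIrreducibleRep σ) {K : Submodule R (V × W)} (hK : IsSubrep (prodRep ρ σ) K)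
    (hfst : K.map (LinearMap.fst R V W) ≠ ⊥) (hsnd : K.map (LinearMap.snd R V W) ≠ ⊥)
    (hinl : K.comap (LinearMap.inl R V W) ≠ ⊤) (hinr : K.comap (LinearMap.inr R V W) ≠ ⊤) :
    ∃ e : V ≃ₗ[R] W, ∀ u x, e (ρ u x) = σ u (e x) := by
  have hfst' := (hρ _ (hK.map (LinearMap.fst R V W) fun _ _ => rfl)).resolve_left hfst
  have hsnd' := (hσ _ (hK.map (LinearMap.snd R V W) fun _ _ => rfl)).resolve_left hsnd
  have hinl' := (hρ _ (hK.comap (LinearMap.inl R V W) fun u x => by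
    simp [prodRep_apply])).resolve_right hinl
  have hinr' := (hσ _ (hK.comap (LinearMap.inr R V W) fun u x => by
    simp [prodRep_apply])).resolve_right hinr
  have hbij_fst : Function.Bijective ((LinearMap.fst R V W).domRestrict K) := by
    refine ⟨LinearMap.injective_domRestrict_iff.2 ?_, LinearMap.range_eq_top.1 ?_⟩
    · rw [LinearMap.ker_fst, disjoint_iff, inf_comm, ← Submodule.map_comap_eq, hinr',
        Submodule.map_bot]
    · rw [LinearMap.range_domRestrict, hfst']
  have hbij_snd : Function.Bijective ((LinearMap.snd R V W).domRestrict K) := by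
    refine ⟨LinearMap.injective_domRestrict_iff.2 ?_, LinearMap.range_eq_top.1 ?_⟩
    · rw [LinearMap.ker_snd, disjoint_iff, inf_comm, ← Submodule.map_comap_eq, hinl',
        Submodule.map_bot]
    · rw [LinearMap.range_domRestrict, hsnd']
  obtain ⟨e, rfl⟩ := Submodule.exists_equiv_eq_graph hbij_fst hbij_snd
  exact ⟨e, fun u x => (hK u (x, e x) rfl).symm⟩

end Goursat

section EnvelopingAlgebra

variable {ι : Type} [DecidableEq ι] {p : ι → ℕ} {B : Type*} [Ring B] [Algebra ℂ B]
  {V : Type*} [AddCommGroup V] [Module ℂ V] {ρ : UEA ι p →ₐ[ℂ] Module.End ℂ V}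

lemma isSubrep_of_gen {N : Submodule ℂ V} (h : ∀ i j, ∀ x ∈ N, ρ (gen p i j) x ∈ N) :
    IsSubrep ρ N := by
  intro u
  obtain ⟨u, rfl⟩ := RingQuot.mkAlgHom_surjective ℂ (glRel ι p) u
  induction u with
  | grade0 c =>
    intro x hx
    rw [AlgHom.commutes, AlgHom.commutes, Module.algebraMap_end_apply]
    exact N.smul_mem c hx
  | grade1 x => exact h x.1 x.2
  | mul a b ha hb =>
    intro x hx
    rw [map_mul, map_mul, Module.End.mul_apply]
    exact ha _ (hb _ hx)
  | add a b ha hb =>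
    intro x hx
    rw [map_add, map_add, LinearMap.add_apply]
    exact N.add_mem (ha _ hx) (hb _ hx)

/- The relations are stated for an algebra homomorphism out of `UEA ι p` because subtraction on
`UEA ι p` itself agrees only up to unfolding with the one of its `ℂ`-algebra structure. -/
lemma map_gen_mul_map_gen (φ : UEA ι p →ₐ[ℂ] B) (i j k l : ι) :
    φ (gen p i j) * φ (gen p k l) =
      (-1 : ℂ) ^ ((p i + p j) * (p k + p l)) • (φ (gen p k l) * φ (gen p i j)) +
      ((if j = k then φ (gen p i l) else 0) -
        (-1 : ℂ) ^ ((p i + p j) * (p k + p l)) • if l = i then φ (gen p k j) else 0) := by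
  rw [← sub_eq_iff_eq_add']
  simpa only [gen, map_sub, map_mul, map_smul, apply_ite (RingQuot.mkAlgHom ℂ (glRel ι p)),
    apply_ite φ, map_zero] using congrArg φ (RingQuot.mkAlgHom_rel ℂ (glRel.basic (p := p) i j k l))

lemma map_gen_self_mul_map_gen (φ : UEA ι p →ₐ[ℂ] B) (k i j : ι) :
    φ (gen p k k) * φ (gen p i j) = φ (gen p i j) * φ (gen p k k) +
      ((if k = i then 1 else 0) - if k = j then 1 else 0 : ℂ) • φ (gen p i j) := by
  have hsign : (-1 : ℂ) ^ ((p k + p k) * (p i + p j)) = 1 :=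
    (Even.mul_right ⟨_, rfl⟩ _).neg_one_pow
  rw [map_gen_mul_map_gen, hsign, one_smul, one_smul, sub_smul]
  congr 2
  · split_ifs with h <;> simp [h]
  · by_cases h : k = j
    · simp [h]
    · simp [h, Ne.symm h]

/-- The Cartan element `∑ i, c i e_ii` of `gl`. -/
def cartan [Fintype ι] (p : ι → ℕ) (c : ι → ℂ) : UEA ι p := ∑ i, c i • gen p i i

lemma map_cartan_mul_map_gen [Fintype ι] (φ : UEA ι p →ₐ[ℂ] B) (c : ι → ℂ) (i j : ι) :
    φ (cartan p c) * φ (gen p i j) =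
      φ (gen p i j) * φ (cartan p c) + (c i - c j) • φ (gen p i j) := by
  simp only [cartan, map_sum, map_smul, Finset.sum_mul, Finset.mul_sum, smul_mul_assoc,
    mul_smul_comm, map_gen_self_mul_map_gen, smul_add, smul_smul, Finset.sum_add_distrib,
    ← Finset.sum_smul]
  simp [mul_sub]

lemma gen_apply_mem_eigenspace [Fintype ι] {c : ι → ℂ} {ν : ℂ} {x : V}
    (hx : x ∈ (ρ (cartan p c)).eigenspace ν) (i j : ι) :
    ρ (gen p i j) x ∈ (ρ (cartan p c)).eigenspace (ν + (c i - c j)) := by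
  rw [Module.End.mem_eigenspace_iff] at hx ⊢
  rw [← Module.End.mul_apply, map_cartan_mul_map_gen, LinearMap.add_apply, Module.End.mul_apply, hx,
    map_smul, LinearMap.smul_apply, add_smul]

end EnvelopingAlgebra

section Height

variable {ι : Type*} [Fintype ι] {lt : ι → ι → Prop}

open Classical in
/-- The height of an index: the number of indices above it for `lt`. Lowering operators strictly
decrease the eigenvalue of the Cartan element with these coefficients. -/
def height (lt : ι → ι → Prop) (i : ι) : ℕ := (Finset.univ.filter (lt i)).card

lemma height_lt_height [IsStrictOrder ι lt] {i j : ι} (h : lt i j) : height lt j < height lt i := by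
  classical
  refine Finset.card_lt_card (Finset.ssubset_iff_subset_ne.2 ⟨fun k hk => ?_, fun heq => ?_⟩)
  · simp only [Finset.mem_filter_univ] at hk ⊢
    exact _root_.trans h hk
  · have hj : j ∈ Finset.univ.filter (lt j) := heq ▸ by simpa using h
    exact irrefl (r := lt) j (by simpa using hj)

end Height

section HighestWeight

variable {ι : Type} [DecidableEq ι] {p : ι → ℕ} {lt : ι → ι → Prop} {lam : ι → ℂ}
  {V W : Type*} [AddCommGroup V] [Module ℂ V] [AddCommGroup W] [Module ℂ W]
  {ρ : UEA ι p →ₐ[ℂ] Module.End ℂ V} {σ : UEA ι p →ₐ[ℂ] Module.End ℂ W} {v w : V}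

/-- Highest weight vectors of weight `lam` for the Borel subalgebra spanned by the `e_ij` with
`i = j` or `lt i j`; the zero vector is allowed. -/
structure IsHighestWeightVector (lt : ι → ι → Prop) (ρ : UEA ι p →ₐ[ℂ] Module.End ℂ V)
    (lam : ι → ℂ) (w : V) : Prop where
  raising : ∀ i j, lt i j → ρ (gen p i j) w = 0
  weight : ∀ i, ρ (gen p i i) w = lam i • w

lemma IsHighestWeightVector.prod (hv : IsHighestWeightVector lt ρ lam v) {w : W}
    (hw : IsHighestWeightVector lt σ lam w) :
    IsHighestWeightVector lt (prodRep ρ σ) lam (v, w) where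
  raising i j hij := by rw [prodRep_apply, hv.raising i j hij, hw.raising i j hij]; rfl
  weight i := by rw [prodRep_apply, hv.weight, hw.weight]; rfl

lemma mem_eigenspace_cartan [Fintype ι] (hw : ∀ i, ρ (gen p i i) w = lam i • w) (c : ι → ℂ) :
    w ∈ (ρ (cartan p c)).eigenspace (∑ i, c i * lam i) := by
  rw [Module.End.mem_eigenspace_iff, cartan, map_sum, LinearMap.sum_apply, Finset.sum_smul]
  simp only [map_smul, LinearMap.smul_apply, hw, smul_smul]

/-- The subspace `U(𝔫⁻)w`, as the smallest subspace containing `w` and stable under the lowering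
operators. -/
def lowerSpan (lt : ι → ι → Prop) (ρ : UEA ι p →ₐ[ℂ] Module.End ℂ V) (w : V) : Submodule ℂ V :=
  sInf {N | w ∈ N ∧ ∀ i j, lt j i → ∀ x ∈ N, ρ (gen p i j) x ∈ N}

lemma lowerSpan_le {N : Submodule ℂ V} (hw : w ∈ N)
    (hN : ∀ i j, lt j i → ∀ x ∈ N, ρ (gen p i j) x ∈ N) : lowerSpan lt ρ w ≤ N :=
  sInf_le ⟨hw, hN⟩

lemma mem_lowerSpan_self : w ∈ lowerSpan lt ρ w :=
  Submodule.mem_sInf.2 fun _ hN => hN.1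

lemma lowering_apply_mem_lowerSpan {i j : ι} (hij : lt j i) {x : V}
    (hx : x ∈ lowerSpan lt ρ w) : ρ (gen p i j) x ∈ lowerSpan lt ρ w :=
  Submodule.mem_sInf.2 fun N hN => hN.2 i j hij x (Submodule.mem_sInf.1 hx N hN)

/- The vectors sent into `U(𝔫⁻)w` by every generator form a subspace that contains `w` and is
stable under lowering operators, because the commutator of two generators is a combination of
generators. -/
lemma IsHighestWeightVector.isSubrep_lowerSpan [Std.Trichotomous lt]
    (hw : IsHighestWeightVector lt ρ lam w) : IsSubrep ρ (lowerSpan lt ρ w) := by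
  let Q : Submodule ℂ V :=
    lowerSpan lt ρ w ⊓ ⨅ i, ⨅ j, (lowerSpan lt ρ w).comap (ρ (gen p i j))
  have mem_Q (y : V) :
      y ∈ Q ↔ y ∈ lowerSpan lt ρ w ∧ ∀ i j, ρ (gen p i j) y ∈ lowerSpan lt ρ w := by
    simp [Q, Submodule.mem_iInf]
  have hwQ : w ∈ Q := by
    refine (mem_Q w).2 ⟨mem_lowerSpan_self, fun i j => ?_⟩
    rcases trichotomous_of lt i j with hij | rfl | hji
    · exact hw.raising i j hij ▸ zero_mem _
    · exact hw.weight i ▸ Submodule.smul_mem _ _ mem_lowerSpan_self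
    · exact lowering_apply_mem_lowerSpan hji mem_lowerSpan_self
  have hQ (i j : ι) (hji : lt j i) (y : V) (hy : y ∈ Q) : ρ (gen p i j) y ∈ Q := by
    have hgen := ((mem_Q y).1 hy).2
    refine (mem_Q _).2 ⟨hgen i j, fun k l => ?_⟩
    rw [← Module.End.mul_apply, map_gen_mul_map_gen]
    simp only [LinearMap.add_apply, LinearMap.sub_apply,
      LinearMap.smul_apply, Module.End.mul_apply]
    refine add_mem (Submodule.smul_mem _ _ (lowering_apply_mem_lowerSpan hji (hgen k l)))
      (sub_mem ?_ (Submodule.smul_mem _ _ ?_)) <;> split_ifs <;> simp [hgen]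
  exact isSubrep_of_gen fun i j x hx => ((mem_Q x).1 (lowerSpan_le hwQ hQ hx)).2 i j

section Fintype

variable [Fintype ι]

/-- The Cartan element grading a highest weight representation by height. -/
def heightElement (p : ι → ℕ) (lt : ι → ι → Prop) : UEA ι p := cartan p fun i => height lt i

lemma lowering_apply_mem_iSup_eigenspace [IsStrictOrder ι lt] {i j : ι} (hji : lt j i) {μ : ℂ}
    {k : ℕ} {x : V} (hx : x ∈ (ρ (heightElement p lt)).eigenspace (μ - k)) :
    ρ (gen p i j) x ∈ ⨆ l : ℕ, (ρ (heightElement p lt)).eigenspace (μ - (l + 1)) := by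
  obtain ⟨d, hd⟩ := Nat.exists_eq_add_of_lt (height_lt_height hji)
  refine Submodule.mem_iSup_of_mem (k + d) ?_
  have heig : μ - ((k + d : ℕ) + 1 : ℂ) = μ - k + (height lt i - height lt j) := by
    rw [hd]
    push_cast
    ring
  rw [heig]
  exact gen_apply_mem_eigenspace hx i j

lemma lowerSpan_le_span_sup_iSup_eigenspace [IsStrictOrder ι lt] {μ : ℂ}
    (hw : w ∈ (ρ (heightElement p lt)).eigenspace μ) :
    lowerSpan lt ρ w ≤
      ℂ ∙ w ⊔ ⨆ k : ℕ, (ρ (heightElement p lt)).eigenspace (μ - (k + 1)) := by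
  refine lowerSpan_le (Submodule.mem_sup_left (Submodule.mem_span_singleton_self w))
    fun i j hji x hx => Submodule.mem_sup_right ?_
  suffices h : ℂ ∙ w ⊔ ⨆ k : ℕ, (ρ (heightElement p lt)).eigenspace (μ - (k + 1)) ≤
      (⨆ k : ℕ, (ρ (heightElement p lt)).eigenspace (μ - (k + 1))).comap (ρ (gen p i j)) from h hx
  refine sup_le ((Submodule.span_singleton_le_iff_mem _ _).2 ?_) (iSup_le fun k y hy => ?_)
  · exact lowering_apply_mem_iSup_eigenspace (k := 0) hji (by simpa using hw)
  · exact lowering_apply_mem_iSup_eigenspace (k := k + 1) hji (by simpa using hy)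

lemma disjoint_eigenspace_iSup_eigenspace_sub (f : Module.End ℂ V) (μ : ℂ) :
    Disjoint (f.eigenspace μ) (⨆ k : ℕ, f.eigenspace (μ - (k + 1))) := by
  refine (f.eigenspaces_iSupIndep μ).mono_right (iSup_le fun k => ?_)
  refine le_iSup₂_of_le (μ - (k + 1)) ?_ le_rfl
  rw [Ne, sub_eq_self]
  exact Nat.cast_add_one_ne_zero k

end Fintype

variable [Finite ι]

lemma mem_span_singleton_of_mem_lowerSpan [IsStrictOrder ι lt]
    (hw : ∀ i, ρ (gen p i i) w = lam i • w) {y : V} (hy : y ∈ lowerSpan lt ρ w)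
    (hy' : ∀ i, ρ (gen p i i) y = lam i • y) : y ∈ ℂ ∙ w := by
  have := Fintype.ofFinite ι
  have hwμ := mem_eigenspace_cartan hw fun i => (height lt i : ℂ)
  have hyμ := mem_eigenspace_cartan hy' fun i => (height lt i : ℂ)
  obtain ⟨x, hx, z, hz, rfl⟩ :=
    Submodule.mem_sup.1 (lowerSpan_le_span_sup_iSup_eigenspace hwμ hy)
  have hzμ := (Submodule.add_mem_iff_right _
    ((Submodule.span_singleton_le_iff_mem _ _).2 hwμ hx)).1 hyμ
  rw [Submodule.disjoint_def.1 (disjoint_eigenspace_iSup_eigenspace_sub _ _) z hzμ hz, add_zero]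
  exact hx

lemma IsHighestWeightVector.eq_of_smul_mem_lowerSpan [IsStrictOrder ι lt]
    (hv : IsHighestWeightVector lt ρ lam v) (hv0 : v ≠ 0) {w : W}
    (hw : IsHighestWeightVector lt σ lam w) (hw0 : w ≠ 0) {s t : ℂ}
    (h : (s • v, t • w) ∈ lowerSpan lt (prodRep ρ σ) (v, w)) : s = t := by
  have hweight (i : ι) :
      prodRep ρ σ (gen p i i) (s • v, t • w) = lam i • (s • v, t • w) := by
    simp [prodRep_apply, hv.weight, hw.weight, smul_comm (lam i)]
  obtain ⟨c, hc⟩ := Submodule.mem_span_singleton.1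
    (mem_span_singleton_of_mem_lowerSpan (hv.prod hw).weight h hweight)
  rw [Prod.smul_mk, Prod.mk.injEq] at hc
  exact (smul_left_injective ℂ hv0 hc.1).symm.trans (smul_left_injective ℂ hw0 hc.2)

theorem exists_equiv_of_isHighestWeightVector [IsStrictTotalOrder ι lt] (hρ : IsIrreducibleRep ρ)
    (hσ : IsIrreducibleRep σ) (hv : IsHighestWeightVector lt ρ lam v) (hv0 : v ≠ 0) {w : W}
    (hw : IsHighestWeightVector lt σ lam w) (hw0 : w ≠ 0) :
    ∃ e : V ≃ₗ[ℂ] W, ∀ u x, e (ρ u x) = σ u (e x) := by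
  have hmem : (v, w) ∈ lowerSpan lt (prodRep ρ σ) (v, w) := mem_lowerSpan_self
  refine hρ.exists_equiv_of_isSubrep_prodRep hσ (hv.prod hw).isSubrep_lowerSpan
    ((Submodule.ne_bot_iff _).2 ⟨v, ⟨_, hmem, rfl⟩, hv0⟩)
    ((Submodule.ne_bot_iff _).2 ⟨w, ⟨_, hmem, rfl⟩, hw0⟩) (fun h => ?_) (fun h => ?_)
  · have hv_mem : v ∈ (lowerSpan lt (prodRep ρ σ) (v, w)).comap (LinearMap.inl ℂ V W) :=
      h ▸ Submodule.mem_top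
    exact one_ne_zero (hv.eq_of_smul_mem_lowerSpan hv0 hw hw0 (s := 1) (t := 0)
      (by simpa using hv_mem))
  · have hw_mem : w ∈ (lowerSpan lt (prodRep ρ σ) (v, w)).comap (LinearMap.inr ℂ V W) :=
      h ▸ Submodule.mem_top
    exact zero_ne_one (hv.eq_of_smul_mem_lowerSpan hv0 hw hw0 (s := 0) (t := 1)
      (by simpa using hw_mem))

end HighestWeight

section Index

variable {m n : ℕ}

lemma iltI_eq_lex : iltI (m := m) (n := n) = Sum.Lex (· < ·) (· < ·) := by
  ext (c | c) (d | d) <;> simp [iltI]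

instance : IsStrictTotalOrder (Ind m n) iltI := by
  rw [iltI_eq_lex]
  exact { }

lemma not_iltI_z0 (i : Ind (m + 1) n) : ¬ iltI i z0 := by
  rcases i with _ | _ <;> simp [iltI, z0]

lemma iltI_emb_iff {c d : Ind m n} : iltI (emb c) (emb d) ↔ iltI c d := by
  rcases c with c | c <;> rcases d with d | d <;> simp [iltI, emb]

lemma eq_z0_or_exists_eq_emb (i : Ind (m + 1) n) : i = z0 ∨ ∃ c : Ind m n, i = emb c := by
  rcases i with i | i
  · induction i using Fin.cases with
    | zero => exact Or.inl rfl
    | succ k => exact Or.inr ⟨Sum.inl k, rfl⟩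
  · exact Or.inr ⟨Sum.inr i, rfl⟩

lemma lamTilde_z0 (a r : ℂ) (lam : Ind m n → ℂ) : lamTilde a r lam z0 = a + r := rfl

lemma lamTilde_emb (a r : ℂ) (lam : Ind m n → ℂ) (c : Ind m n) :
    lamTilde a r lam (emb c) = lam c + (-1) ^ (pI c * pI c) * r := by
  rcases c with c | c <;> simp [lamTilde, emb, pI, sub_eq_add_neg]

end Index

section Monomials

variable {m n : ℕ} {L : Type*} [AddCommGroup L] [Module ℂ L]

lemma mkOp_single {α M : Type} [AddCommGroup M] [Module ℂ M] (g : α → M) (x : α) :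
    mkOp g (Finsupp.single x 1) = g x := by
  simp [mkOp]

/-- The exponents `(k_1, …, k_m, k_1̄, …, k_n̄)` of a monomial of `F_a`, as natural numbers. -/
def exponent (y : FaMon m n) : Ind m n → ℕ := Sum.elim y.1 (Bool.toNat ∘ y.2)

/-- The total degree of a monomial of `F_a` in the variables `t_i`, `i ∈ I`; the exponent of `t_0`
is not counted. -/
def degree (y : FaMon m n) : ℕ := ∑ i, exponent y i

lemma exponent_update_fst (y : FaMon m n) (i : Fin m) (k : ℕ) :
    exponent (Function.update y.1 i k, y.2) = Function.update (exponent y) (Sum.inl i) k :=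
  Sum.update_elim_inl.symm

lemma exponent_update_snd (y : FaMon m n) (j : Fin n) (b : Bool) :
    exponent (y.1, Function.update y.2 j b) =
      Function.update (exponent y) (Sum.inr j) b.toNat := by
  rw [exponent, Function.comp_update, exponent, Sum.update_elim_inr]

lemma degree_eq_zero_iff {y : FaMon m n} : degree y = 0 ↔ y = hwMon m n := by
  simp [degree, exponent, hwMon, Prod.ext_iff, funext_iff]

lemma cntB_update_self (b : Fin n → Bool) (i : Fin n) (c : Bool) :
    cntB (Function.update b i c) i = cntB b i := by
  unfold cntB
  congr 1
  refine Finset.filter_congr fun j _ => and_congr_right fun hj => ?_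
  rw [Function.update_of_ne hj.ne]

lemma parM_hwMon : parM (hwMon m n) = 0 := by
  simp [parM, hwMon, cntA]

lemma aParE_amono (i : Fin m) (y : FaMon m n) :
    aParE i (amono y) = (y.1 i : ℂ) • amono (Function.update y.1 i (y.1 i - 1), y.2) :=
  mkOp_single _ _

lemma aParO_amono (i : Fin n) (y : FaMon m n) :
    aParO i (amono y) = if y.2 i then
      ((-1 : ℂ) ^ cntB y.2 i) • amono (y.1, Function.update y.2 i false) else 0 :=
  mkOp_single _ _

lemma aDivE_amono (i : Fin m) (y : FaMon m n) :
    aDivE i (amono y) = amono (Function.update y.1 i (y.1 i + 1), y.2) :=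
  mkOp_single _ _

lemma aDivO_amono (i : Fin n) (y : FaMon m n) :
    aDivO i (amono y) = if y.2 i then 0 else
      ((-1 : ℂ) ^ cntB y.2 i) • amono (y.1, Function.update y.2 i true) :=
  mkOp_single _ _

lemma aTD_z0_z0_amono_hwMon (a : ℂ) :
    aTD a z0 z0 (amono (hwMon m n)) = a • amono (hwMon m n) := by
  change aPar0 a (amono (hwMon m n)) = a • amono (hwMon m n)
  rw [aPar0, amono, mkOp_single]
  simp [hwMon, cntA, amono]

lemma aTD_emb_emb_amono (a : ℂ) (i : Ind m n) (y : FaMon m n) :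
    aTD a (emb i) (emb i) (amono y) = (exponent y i : ℂ) • amono y := by
  rcases i with i | i
  · change aDivE i (aParE i (amono y)) = (y.1 i : ℂ) • amono y
    rcases Nat.eq_zero_or_pos (y.1 i) with hi | hi
    · simp [aParE_amono, hi]
    · simp [aParE_amono, aDivE_amono, Nat.sub_add_cancel hi]
  · change aDivO i (aParO i (amono y)) = ((y.2 i).toNat : ℂ) • amono y
    cases hi : y.2 i with
    | false => simp [aParO_amono, hi]
    | true =>
      have hupd : Function.update y.2 i true = y.2 := by rw [← hi, Function.update_eq_self]
      simp [aParO_amono, aDivO_amono, hi, hupd, cntB_update_self, smul_smul, ← mul_pow]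

lemma aParB_emb_amono_hwMon (a : ℂ) (i : Ind m n) :
    aParB a (emb i) (amono (hwMon m n)) = 0 := by
  rcases i with i | i
  · change aParE i (amono (hwMon m n)) = 0
    simp [aParE_amono, hwMon]
  · change aParO i (amono (hwMon m n)) = 0
    simp [aParO_amono, hwMon]

lemma aParB_emb_amono_eq_zero_or_exists (a : ℂ) (i : Ind m n) (y : FaMon m n) :
    aParB a (emb i) (amono y) = 0 ∨
      ∃ (c : ℂ) (y' : FaMon m n), degree y' < degree y ∧
        aParB a (emb i) (amono y) = c • amono y' := by
  rcases i with i | i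
  · change aParE i (amono y) = 0 ∨ ∃ (c : ℂ) (y' : FaMon m n), degree y' < degree y ∧
      aParE i (amono y) = c • amono y'
    rcases Nat.eq_zero_or_pos (y.1 i) with hi | hi
    · exact Or.inl (by simp [aParE_amono, hi])
    · refine Or.inr ⟨_, _, Fintype.sum_strictMono ?_, aParE_amono i y⟩
      rw [exponent_update_fst]
      exact update_lt_self_iff.2 (Nat.sub_lt hi one_pos)
  · change aParO i (amono y) = 0 ∨ ∃ (c : ℂ) (y' : FaMon m n), degree y' < degree y ∧
      aParO i (amono y) = c • amono y'
    rw [aParO_amono]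
    split_ifs with hi
    · refine Or.inr ⟨_, _, Fintype.sum_strictMono ?_, rfl⟩
      rw [exponent_update_snd]
      exact update_lt_self_iff.2 (by simp [exponent, hi])
    · exact Or.inl rfl

/-- The part of `F_a ⊗ L` of total degree less than `d` in the variables `t_i`, `i ∈ I`. -/
def degreeLT (m n : ℕ) (L : Type*) [AddCommGroup L] [Module ℂ L] (d : ℕ) :
    Submodule ℂ (FaSp m n ⊗[ℂ] L) :=
  Submodule.span ℂ {z | ∃ (y : FaMon m n) (v : L), degree y < d ∧ amono y ⊗ₜ v = z}

lemma amono_tmul_mem_degreeLT {d : ℕ} {y : FaMon m n} (hy : degree y < d) (v : L) :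
    amono y ⊗ₜ v ∈ degreeLT m n L d :=
  Submodule.subset_span ⟨y, v, hy, rfl⟩

lemma degreeLT_le {d : ℕ} {N : Submodule ℂ (FaSp m n ⊗[ℂ] L)}
    (hN : ∀ y v, degree y < d → amono y ⊗ₜ v ∈ N) : degreeLT m n L d ≤ N :=
  Submodule.span_le.2 fun _ ⟨y, v, hy, h⟩ => h ▸ hN y v hy

lemma degreeLT_zero : degreeLT m n L 0 = ⊥ :=
  eq_bot_iff.2 (degreeLT_le fun _ _ h => absurd h (Nat.not_lt_zero _))

lemma rTensor_aParB_emb_mem_degreeLT (a : ℂ) (i : Ind m n) {d : ℕ} {z : FaSp m n ⊗[ℂ] L}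
    (hz : z ∈ degreeLT m n L (d + 1)) : (aParB a (emb i)).rTensor L z ∈ degreeLT m n L d := by
  refine degreeLT_le (N := (degreeLT m n L d).comap ((aParB a (emb i)).rTensor L))
    (fun y v hy => ?_) hz
  rw [Submodule.mem_comap, LinearMap.rTensor_tmul]
  obtain h | ⟨c, y', hy', h⟩ := aParB_emb_amono_eq_zero_or_exists a i y
  · rw [h, TensorProduct.zero_tmul]
    exact zero_mem _
  · rw [h, ← TensorProduct.smul_tmul']
    exact Submodule.smul_mem _ _ (amono_tmul_mem_degreeLT (hy'.trans_le (Nat.le_of_lt_succ hy)) v)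

lemma exists_mem_degreeLT (z : FaSp m n ⊗[ℂ] L) : ∃ d, z ∈ degreeLT m n L d := by
  obtain ⟨f, rfl⟩ : ∃ f : FaMon m n →₀ L, ∑ y ∈ f.support, amono y ⊗ₜ f y = z := by
    let coord := TensorProduct.finsuppScalarLeft ℂ L (FaMon m n)
    refine ⟨coord z, coord.injective ?_⟩
    simp only [map_sum, amono, coord, ← TensorProduct.finsuppScalarLeft_symm_apply_single,
      LinearEquiv.apply_symm_apply]
    exact Finsupp.sum_single _
  exact ⟨f.support.sup degree + 1, sum_mem fun y hy =>
    amono_tmul_mem_degreeLT (Nat.lt_succ_of_le (Finset.le_sup hy)) (f y)⟩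

lemma finsuppScalarLeft_rTensor_of_diagonal {α : Type*} [DecidableEq α]
    {f : Module.End ℂ (α →₀ ℂ)} {c : α → ℂ}
    (hf : ∀ x, f (Finsupp.single x 1) = c x • Finsupp.single x 1) (z : (α →₀ ℂ) ⊗[ℂ] L) (x : α) :
    TensorProduct.finsuppScalarLeft ℂ L α (f.rTensor L z) x =
      c x • TensorProduct.finsuppScalarLeft ℂ L α z x := by
  obtain ⟨g, rfl⟩ := (TensorProduct.finsuppScalarLeft ℂ L α).symm.surjective z
  induction g using Finsupp.induction_linear with
  | zero => simp
  | add g h hg hh => simp only [map_add, Finsupp.add_apply, hg, hh, smul_add]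
  | single y v =>
    rw [TensorProduct.finsuppScalarLeft_symm_apply_single, LinearMap.rTensor_tmul, hf]
    simp only [TensorProduct.finsuppScalarLeft_apply_tmul_apply, Finsupp.smul_apply,
      Finsupp.single_apply]
    split_ifs with h <;> simp [h]

/-- The Euler operator `∑ i ∈ I, t_i ∂_i` on `F_a`. -/
def eulerI (m n : ℕ) (a : ℂ) : Module.End ℂ (FaSp m n) := ∑ i, aTD a (emb i) (emb i)

lemma eulerI_amono (a : ℂ) (y : FaMon m n) :
    eulerI m n a (amono y) = (degree y : ℂ) • amono y := by
  simp only [eulerI, LinearMap.sum_apply, aTD_emb_emb_amono, ← Finset.sum_smul, degree,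
    Nat.cast_sum]

lemma rTensor_eulerI_eq_zero {a : ℂ} {z : FaSp m n ⊗[ℂ] L}
    (hz : ∀ i, (aParB a (emb i)).rTensor L z = 0) : (eulerI m n a).rTensor L z = 0 := by
  simp only [eulerI, ← LinearMap.coe_rTensorHom, map_sum, LinearMap.sum_apply]
  refine Finset.sum_eq_zero fun i _ => ?_
  rw [LinearMap.coe_rTensorHom, aTD, Module.End.mul_eq_comp, LinearMap.rTensor_comp_apply, hz,
    map_zero]

/- The Euler operator kills such a `z` and multiplies its component along a monomial by the degree,
so only the component of degree zero survives. -/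
lemma exists_eq_amono_hwMon_tmul {a : ℂ} {z : FaSp m n ⊗[ℂ] L}
    (hz : ∀ i, (aParB a (emb i)).rTensor L z = 0) : ∃ v : L, z = amono (hwMon m n) ⊗ₜ v := by
  let coord := TensorProduct.finsuppScalarLeft ℂ L (FaMon m n)
  have hcoord (y : FaMon m n) (hy : y ≠ hwMon m n) : coord z y = 0 := by
    have h := finsuppScalarLeft_rTensor_of_diagonal (eulerI_amono a) z y
    rw [rTensor_eulerI_eq_zero hz, map_zero, Finsupp.zero_apply, eq_comm, smul_eq_zero] at h
    exact h.resolve_left (Nat.cast_ne_zero.2 (degree_eq_zero_iff.not.2 hy))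
  refine ⟨coord z (hwMon m n), ?_⟩
  rw [amono, ← TensorProduct.finsuppScalarLeft_symm_apply_single]
  refine coord.eq_symm_apply.2 (Finsupp.eq_single_iff.2 ⟨fun y hy => ?_, rfl⟩)
  exact Finset.mem_singleton.2 (not_imp_comm.1 (hcoord y) (Finsupp.mem_support_iff.1 hy))

lemma exists_amono_hwMon_tmul_mem_of_mem_degreeLT {a : ℂ} {N : Submodule ℂ (FaSp m n ⊗[ℂ] L)}
    (hN : ∀ i, ∀ z ∈ N, (aParB a (emb i)).rTensor L z ∈ N) {d : ℕ} {z : FaSp m n ⊗[ℂ] L}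
    (hzd : z ∈ degreeLT m n L d) (hzN : z ∈ N) (hz0 : z ≠ 0) :
    ∃ v ≠ 0, amono (hwMon m n) ⊗ₜ v ∈ N := by
  induction d generalizing z with
  | zero => exact absurd (by rwa [degreeLT_zero, Submodule.mem_bot] at hzd) hz0
  | succ d ih =>
    by_cases hz : ∀ i, (aParB a (emb i)).rTensor L z = 0
    · obtain ⟨v, rfl⟩ := exists_eq_amono_hwMon_tmul hz
      exact ⟨v, fun hv => hz0 (by rw [hv, TensorProduct.tmul_zero]), hzN⟩
    · push Not at hz
      obtain ⟨i, hi⟩ := hz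
      exact ih (rTensor_aParB_emb_mem_degreeLT a i hzd) (hN i z hzN) hi

lemma exists_amono_hwMon_tmul_mem {a : ℂ} {N : Submodule ℂ (FaSp m n ⊗[ℂ] L)}
    (hN : ∀ i, ∀ z ∈ N, (aParB a (emb i)).rTensor L z ∈ N) (hN0 : N ≠ ⊥) :
    ∃ v ≠ 0, amono (hwMon m n) ⊗ₜ v ∈ N := by
  obtain ⟨z, hzN, hz0⟩ := (Submodule.ne_bot_iff N).1 hN0
  obtain ⟨d, hd⟩ := exists_mem_degreeLT z
  exact exists_amono_hwMon_tmul_mem_of_mem_degreeLT hN hd hzN hz0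

lemma amono_tmul_ne_zero (y : FaMon m n) {v : L} (hv : v ≠ 0) : amono y ⊗ₜ[ℂ] v ≠ 0 := by
  rwa [amono, ← TensorProduct.finsuppScalarLeft_symm_apply_single, Ne,
    LinearEquiv.map_eq_zero_iff, Finsupp.single_eq_zero]

end Monomials

namespace IsTensorRep

variable {m n : ℕ} {a r : ℂ} {lam : Ind m n → ℂ} {L : Type} [AddCommGroup L] [Module ℂ L]
  {ρ : UEA (Ind m n) pI →ₐ[ℂ] Module.End ℂ L}
  {Θ : UEA (Ind (m + 1) n) pI →ₐ[ℂ] Module.End ℂ (FaSp m n ⊗[ℂ] L)}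

lemma gen_z0_emb (hΘ : IsTensorRep a r ρ Θ) (d : Ind m n) :
    Θ (gen pI z0 (emb d)) = (aParB a (emb d)).rTensor L :=
  TensorProduct.ext <| Finsupp.lhom_ext' fun x => LinearMap.ext_ring <| LinearMap.ext fun v =>
    hΘ.2.2.1 d x v

lemma gen_emb_emb_amono_hwMon_tmul (hΘ : IsTensorRep a r ρ Θ) (c d : Ind m n) (v : L) :
    Θ (gen pI (emb c) (emb d)) (amono (hwMon m n) ⊗ₜ v) =
      amono (hwMon m n) ⊗ₜ ρ (gen pI c d) v +
      if c = d then ((-1 : ℂ) ^ (pI c * pI d) * r) • (amono (hwMon m n) ⊗ₜ v) else 0 := by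
  rw [hΘ.1, aTD, Module.End.mul_apply, aParB_emb_amono_hwMon, map_zero, TensorProduct.zero_tmul,
    zero_add, parM_hwMon, mul_zero, pow_zero, one_smul]

lemma isHighestWeightVector (hΘ : IsTensorRep a r ρ Θ) {v : L}
    (hv : IsHighestWeightVector iltI ρ lam v) :
    IsHighestWeightVector iltI Θ (lamTilde a r lam) (amono (hwMon m n) ⊗ₜ v) where
  raising i j hij := by
    obtain rfl | ⟨d, rfl⟩ := eq_z0_or_exists_eq_emb j
    · exact absurd hij (not_iltI_z0 i)
    obtain rfl | ⟨c, rfl⟩ := eq_z0_or_exists_eq_emb i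
    · rw [hΘ.gen_z0_emb, LinearMap.rTensor_tmul, aParB_emb_amono_hwMon, TensorProduct.zero_tmul]
    · have hcd := iltI_emb_iff.1 hij
      rw [hΘ.gen_emb_emb_amono_hwMon_tmul, hv.raising c d hcd, if_neg (ne_of_irrefl hcd),
        TensorProduct.tmul_zero, add_zero]
  weight i := by
    obtain rfl | ⟨c, rfl⟩ := eq_z0_or_exists_eq_emb i
    · rw [hΘ.2.2.2, aTD_z0_z0_amono_hwMon, ← TensorProduct.smul_tmul', ← add_smul, lamTilde_z0]
    · rw [hΘ.gen_emb_emb_amono_hwMon_tmul, if_pos rfl, hv.weight, TensorProduct.tmul_smul,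
        ← add_smul, lamTilde_emb]

lemma isSubrep_comap_mk_amono_hwMon (hΘ : IsTensorRep a r ρ Θ)
    {N : Submodule ℂ (FaSp m n ⊗[ℂ] L)} (hN : IsSubrep Θ N) :
    IsSubrep ρ (N.comap (TensorProduct.mk ℂ _ L (amono (hwMon m n)))) := by
  refine isSubrep_of_gen fun c d v hv => ?_
  have hgen := hN (gen pI (emb c) (emb d)) _ hv
  rw [TensorProduct.mk_apply, hΘ.gen_emb_emb_amono_hwMon_tmul] at hgen
  have hdiag : (if c = d then ((-1 : ℂ) ^ (pI c * pI d) * r) • (amono (hwMon m n) ⊗ₜ[ℂ] v)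
      else 0) ∈ N := by
    split_ifs
    · exact N.smul_mem _ hv
    · exact zero_mem _
  exact (Submodule.add_mem_iff_left (M := FaSp m n ⊗[ℂ] L) N hdiag).1 hgen

lemma amono_hwMon_tmul_mem (hΘ : IsTensorRep a r ρ Θ) (hρ : IsIrreducibleRep ρ)
    {N : Submodule ℂ (FaSp m n ⊗[ℂ] L)} (hN : IsSubrep Θ N) (hN0 : N ≠ ⊥) (v : L) :
    amono (hwMon m n) ⊗ₜ v ∈ N := by
  obtain ⟨w, hw, hwN⟩ := exists_amono_hwMon_tmul_mem (a := a)
    (fun i z hz => hΘ.gen_z0_emb i ▸ hN (gen pI z0 (emb i)) z hz) hN0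
  have htop := hρ.isCyclicVector hw _ (hΘ.isSubrep_comap_mk_amono_hwMon hN) hwN
  exact htop.ge (Submodule.mem_top (x := v))

theorem isIrreducibleRep_iff (hΘ : IsTensorRep a r ρ Θ) (hρ : IsIrreducibleRep ρ) {v : L}
    (hv : v ≠ 0) :
    IsIrreducibleRep Θ ↔ IsCyclicVector Θ (amono (hwMon m n) ⊗ₜ v) :=
  ⟨fun h => h.isCyclicVector (amono_tmul_ne_zero _ hv), fun h N hN =>
    or_iff_not_imp_left.2 fun hN0 => h N hN (hΘ.amono_hwMon_tmul_mem hρ hN hN0 v)⟩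

end IsTensorRep

/-- Theorem 4.3.  `F_a ⊗ L(λ) ≅ L(λ̃)` as `gl(m+1|n)`-modules if and only if
`F_a ⊗ L(λ)` is generated by the highest weight vector `t_0^a ⊗ v_λ`. -/
theorem stmt7 (m n : ℕ) (a r : ℂ) (lam : Ind m n → ℂ) (HW : SimpleHW m n lam)
    (HW' : SimpleHW (m+1) n (lamTilde a r lam))
    (Θ : UEA (Ind (m+1) n) pI →ₐ[ℂ] Module.End ℂ (FaSp m n ⊗[ℂ] HW.L))
    (hΘ : IsTensorRep a r HW.ρ Θ) :
    (∃ g : (FaSp m n ⊗[ℂ] HW.L) ≃ₗ[ℂ] HW'.L,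
      ∀ (u : UEA (Ind (m+1) n) pI) (x : FaSp m n ⊗[ℂ] HW.L),
        g (Θ u x) = HW'.ρ u (g x)) ↔
    (∀ N : Submodule ℂ (FaSp m n ⊗[ℂ] HW.L),
      (∀ (u : UEA (Ind (m+1) n) pI), ∀ x ∈ N, Θ u x ∈ N) →
      amono (hwMon m n) ⊗ₜ[ℂ] HW.v ∈ N → N = ⊤) := by
  refine Iff.trans ⟨fun ⟨g, hg⟩ => IsIrreducibleRep.of_equiv HW'.simple g hg, fun h => ?_⟩
    (hΘ.isIrreducibleRep_iff HW.simple HW.v_ne)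
  exact exists_equiv_of_isHighestWeightVector h HW'.simple
    (hΘ.isHighestWeightVector ⟨HW.hw, HW.hwt⟩) (amono_tmul_ne_zero _ HW.v_ne)
    ⟨HW'.hw, HW'.hwt⟩ HW'.v_ne
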